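/- Let f be a transcendental entire function such that f(γ) is unbounded for every unbounded curve γ. Then every connected component D of the preimage of a bounded simply connected domain B is simply connected; that is, ℂ \ D has no bounded component. -/

import Mathlib

open Complex Metric Bornology Topology Filter Set OnePoint

/-- `z₀` is a pole of `f` : `f → ∞` near `z₀`. -/
def IsPole (f : ℂ → ℂ) (z₀ : ℂ) : Prop :=
  Tendsto f (𝓝[≠] z₀) (Bornology.cobounded ℂ)

/-- `f` is a transcendental meromorphic function on `ℂ`
(meromorphic everywhere and not a rational function). -/
def TranscMero (f : ℂ → ℂ) : Prop :=
  MeromorphicOn f Set.univ ∧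
    ¬ ∃ p q : Polynomial ℂ, q ≠ 0 ∧ ∀ z, f z * q.eval z = p.eval z

/-- `f` is a transcendental entire function. -/
def TranscEntire (f : ℂ → ℂ) : Prop :=
  Differentiable ℂ f ∧ ¬ ∃ p : Polynomial ℂ, f = fun z => p.eval z

/-- Preimage under the meromorphic function `f` of the ball `D_r(a)`
(poles, where the `ℂ`-valued representative carries a junk value, are excluded). -/
def preimBall (f : ℂ → ℂ) (a : ℂ) (r : ℝ) : Set ℂ :=
  {z | ¬ IsPole f z ∧ f z ∈ Metric.ball a r}

/-- Every connected component of `S` is a bounded subset of `ℂ`. -/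
def BoundedComponents (S : Set ℂ) : Prop :=
  ∀ z ∈ S, Bornology.IsBounded (connectedComponentIn S z)

/-- `S ⊆ ℂ` is infinitely connected: its complement has infinitely many
connected components. -/
def InfConnected (S : Set ℂ) : Prop :=
  {C : Set ℂ | ∃ z ∈ Sᶜ, C = connectedComponentIn Sᶜ z}.Infinite

/-- `a ∈ ℂ` is a Baker omitted value of the meromorphic function `f`:
`a` is omitted and, for all sufficiently small `r > 0`, every component of the
boundary of `f⁻¹(D_r(a))` is bounded. -/
def BakerOmittedValue (f : ℂ → ℂ) (a : ℂ) : Prop :=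
  (∀ z, ¬ IsPole f z → f z ≠ a) ∧
    ∃ r₀ > 0, ∀ r, 0 < r → r < r₀ →
      BoundedComponents (frontier (preimBall f a r))

/-- `∞` is a Baker omitted value of the entire function `f`: for every large
enough `R`, every component of the boundary of `f⁻¹({|w| > R})` is bounded. -/
def BakerOmittedValueInf (f : ℂ → ℂ) : Prop :=
  ∃ R₀ > 0, ∀ R, R₀ < R → BoundedComponents (frontier {z | R < ‖f z‖})

/-- Baker omitted value at a point of the Riemann sphere `ℂ ∪ {∞}`. -/
def BakerOmittedValueSph (f : ℂ → ℂ) (v : OnePoint ℂ) : Prop :=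
  (v = ∞ ∧ (∀ z, ¬ IsPole f z) ∧ BakerOmittedValueInf f) ∨
    (∃ a : ℂ, v = ↑a ∧ BakerOmittedValue f a)

/-- `b ∈ ℂ` is a (finite) asymptotic value of `f`. -/
def AsympValue (f : ℂ → ℂ) (b : ℂ) : Prop :=
  ∃ γ : ℝ → ℂ, ContinuousOn γ (Set.Ici 0) ∧
    Tendsto γ atTop (Bornology.cobounded ℂ) ∧
    Tendsto (fun t => f (γ t)) atTop (𝓝 b)

/-- `∞` is an asymptotic value of `f`. -/
def AsympValueInf (f : ℂ → ℂ) : Prop :=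
  ∃ γ : ℝ → ℂ, ContinuousOn γ (Set.Ici 0) ∧
    Tendsto γ atTop (Bornology.cobounded ℂ) ∧
    Tendsto (fun t => f (γ t)) atTop (Bornology.cobounded ℂ)

/-- uniform divergence to `∞` of a sequence of functions on `K`. -/
def UnifDiverges (F : ℕ → ℂ → ℂ) (K : Set ℂ) : Prop :=
  ∀ M : ℝ, ∀ᶠ n in atTop, ∀ z ∈ K, M < ‖F n z‖

/-- The iterates of `f` form a normal family on `U`: every subsequence has a
further subsequence converging locally uniformly on `U`, either to a finite
limit function or to `∞`. -/
def NormalOn (f : ℂ → ℂ) (U : Set ℂ) : Prop :=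
  ∀ s : ℕ → ℕ, StrictMono s → ∃ t : ℕ → ℕ, StrictMono t ∧
    ((∃ g : ℂ → ℂ, TendstoLocallyUniformlyOn (fun n => f^[s (t n)]) g atTop U) ∨
      (∀ K ⊆ U, IsCompact K → UnifDiverges (fun n => f^[s (t n)]) K))

/-- The Fatou set of `f`. -/
def FatouSet (f : ℂ → ℂ) : Set ℂ :=
  {z | ∃ U : Set ℂ, IsOpen U ∧ z ∈ U ∧ NormalOn f U}

/-- `U` is a Fatou component of `f`. -/
def IsFatouComponent (f : ℂ → ℂ) (U : Set ℂ) : Prop :=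
  ∃ z ∈ FatouSet f, U = connectedComponentIn (FatouSet f) z

/-- `U` surrounds `0`: `0` lies in a bounded complementary component of `U`. -/
def SurroundsZero (U : Set ℂ) : Prop :=
  0 ∉ U ∧ Bornology.IsBounded (connectedComponentIn Uᶜ 0)

/-- `U` is multiply connected: its complement has a bounded component. -/
def MultiplyConnected (U : Set ℂ) : Prop :=
  ∃ w ∉ U, Bornology.IsBounded (connectedComponentIn Uᶜ w)

/-- `U` is a Baker wandering domain of `f`. -/
def IsBakerWanderingDomain (f : ℂ → ℂ) (U : Set ℂ) : Prop :=
  ∃ z₀ ∈ FatouSet f, U = connectedComponentIn (FatouSet f) z₀ ∧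
    (∀ m n : ℕ, m ≠ n →
      connectedComponentIn (FatouSet f) (f^[m] z₀) ≠
        connectedComponentIn (FatouSet f) (f^[n] z₀)) ∧
    (∃ N : ℕ, ∀ n ≥ N,
      Bornology.IsBounded (connectedComponentIn (FatouSet f) (f^[n] z₀)) ∧
      MultiplyConnected (connectedComponentIn (FatouSet f) (f^[n] z₀)) ∧
      SurroundsZero (connectedComponentIn (FatouSet f) (f^[n] z₀))) ∧
    (∀ z ∈ U, Tendsto (fun n => f^[n] z) atTop (Bornology.cobounded ℂ))

/-- `U` is a completely invariant set for `f`. -/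
def CompletelyInvariant (f : ℂ → ℂ) (U : Set ℂ) : Prop :=
  f '' U ⊆ U ∧ f ⁻¹' U ⊆ U

/-!
Let `D` be a component of `f ⁻¹' B` and suppose that `Dᶜ` has a compact component. In a locally
compact space such a component lies in a relatively compact open set `U` whose boundary avoids
`Dᶜ`, that is, `frontier U ⊆ D`. As `f` is open, `frontier (f '' U) ⊆ f '' frontier U ⊆ B`, and a
simply connected open `B ⊆ ℂ` contains every bounded set whose boundary it contains: for a point
`a ∉ B` of such a set, a continuous logarithm of `z - a` on its boundary would produce one on a
large circle around `a`. Hence `U ⊆ f ⁻¹' B`, and `U \ D` is closed because `frontier U ⊆ D` and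
open because the components of `f ⁻¹' B` are open; as it misses `D`, connectedness makes it empty.
-/

section Components

variable {X : Type*} [TopologicalSpace X]

theorem isClosed_connectedComponentIn {F : Set X} (hF : IsClosed F) (x : X) :
    IsClosed (connectedComponentIn F x) := by
  by_cases hx : x ∈ F
  · rw [connectedComponentIn_eq_image hx]
    exact hF.isClosedEmbedding_subtypeVal.isClosedMap _ isClosed_connectedComponent
  · rw [connectedComponentIn_eq_empty hx]
    exact isClosed_empty

theorem isOpen_sdiff_connectedComponentIn [LocallyConnectedSpace X] {S : Set X} (hS : IsOpen S)
    (x : X) : IsOpen (S \ connectedComponentIn S x) := by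
  refine isOpen_iff_forall_mem_open.mpr fun y ⟨hyS, hyx⟩ ↦
    ⟨connectedComponentIn S y, fun u hu ↦ ⟨connectedComponentIn_subset S y hu, fun hux ↦ hyx ?_⟩,
      hS.connectedComponentIn, mem_connectedComponentIn hyS⟩
  rw [connectedComponentIn_eq hux, ← connectedComponentIn_eq hu]
  exact mem_connectedComponentIn hyS

theorem subset_connectedComponentIn_of_frontier_subset [PreconnectedSpace X]
    [LocallyConnectedSpace X] {S U : Set X} {x : X} (hS : IsOpen S) (hx : x ∈ S) (hU : IsOpen U)
    (hUS : U ⊆ S) (hfr : frontier U ⊆ connectedComponentIn S x) :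
    U ⊆ connectedComponentIn S x := by
  set D := connectedComponentIn S x
  have hopen : IsOpen (U \ D) := by
    rw [← inter_eq_left.mpr hUS, inter_sdiff_assoc]
    exact hU.inter (isOpen_sdiff_connectedComponentIn hS x)
  have hclosed : IsClosed (U \ D) := by
    have hdiff : closure U \ D = U \ D := by
      rw [closure_eq_self_union_frontier, union_sdiff_distrib, sdiff_eq_empty.mpr hfr, union_empty]
    exact hdiff ▸ isClosed_closure.sdiff hS.connectedComponentIn
  rcases isClopen_iff.mp ⟨hclosed, hopen⟩ with hempty | huniv
  · exact sdiff_eq_empty.mp hempty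
  · exact absurd (mem_connectedComponentIn hx) (huniv.ge (mem_univ x)).2

theorem exists_isClopen_subset_of_connectedComponent_subset [T2Space X] [CompactSpace X] {x : X}
    {V : Set X} (hV : IsOpen V) (hxV : connectedComponent x ⊆ V) :
    ∃ Z, IsClopen Z ∧ x ∈ Z ∧ Z ⊆ V := by
  rw [connectedComponent_eq_iInter_isClopen] at hxV
  have : Nonempty {Z : Set X // IsClopen Z ∧ x ∈ Z} := ⟨⟨univ, isClopen_univ, mem_univ x⟩⟩
  have hdir : Directed (· ⊇ ·) fun Z : {Z : Set X // IsClopen Z ∧ x ∈ Z} ↦ Z.1 :=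
    fun ⟨Z, hZ, hxZ⟩ ⟨Z', hZ', hxZ'⟩ ↦
      ⟨⟨Z ∩ Z', hZ.inter hZ', hxZ, hxZ'⟩, inter_subset_left, inter_subset_right⟩
  obtain ⟨⟨Z, hZ, hxZ⟩, hZV⟩ := exists_subset_nhds_of_compactSpace hdir (fun Z ↦ Z.2.1.isClosed)
    fun y hy ↦ hV.mem_nhds (hxV hy)
  exact ⟨Z, hZ, hxZ, hZV⟩

variable [T2Space X]

theorem exists_isCompact_isClosed_sdiff_of_connectedComponentIn_subset {K V : Set X} {x : X}
    (hK : IsCompact K) (hx : x ∈ K) (hV : IsOpen V) (hxV : connectedComponentIn K x ⊆ V) :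
    ∃ Z ⊆ K ∩ V, x ∈ Z ∧ IsCompact Z ∧ IsClosed (K \ Z) := by
  have : CompactSpace K := isCompact_iff_compactSpace.mp hK
  have hsub : connectedComponent (⟨x, hx⟩ : K) ⊆ Subtype.val ⁻¹' V := by
    rwa [← image_subset_iff, ← connectedComponentIn_eq_image hx]
  obtain ⟨Z, hZ, hxZ, hZV⟩ := exists_isClopen_subset_of_connectedComponent_subset
    (hV.preimage continuous_subtype_val) hsub
  refine ⟨Subtype.val '' Z, ?_, mem_image_of_mem Subtype.val hxZ,
    hZ.isClosed.isCompact.image continuous_subtype_val, ?_⟩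
  · rintro _ ⟨y, hy, rfl⟩
    exact ⟨y.2, hZV hy⟩
  · have hcompl : Subtype.val '' Zᶜ = K \ Subtype.val '' Z := by
      rw [image_compl_eq_range_sdiff_image Subtype.val_injective, Subtype.range_coe]
    rw [← hcompl]
    exact (hZ.compl.isClosed.isCompact.image continuous_subtype_val).isClosed

theorem exists_isOpen_isCompact_closure_frontier_subset_compl [LocallyCompactSpace X] {K : Set X}
    {x : X} (hK : IsClosed K) (hx : x ∈ K) (hc : IsCompact (connectedComponentIn K x)) :
    ∃ U, IsOpen U ∧ x ∈ U ∧ IsCompact (closure U) ∧ frontier U ⊆ Kᶜ := by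
  obtain ⟨V, hV, hxV, -, hVc⟩ := exists_open_between_and_isCompact_closure hc isOpen_univ
    (subset_univ _)
  have hKV : connectedComponentIn (K ∩ closure V) x ⊆ V :=
    (connectedComponentIn_mono x inter_subset_left).trans hxV
  have hxKV : x ∈ K ∩ closure V := ⟨hx, subset_closure (hxV (mem_connectedComponentIn hx))⟩
  obtain ⟨Z, hZ, hxZ, hZc, hdiff⟩ := exists_isCompact_isClosed_sdiff_of_connectedComponentIn_subset
    (hVc.inter_left hK) hxKV hV hKV
  have hKZ : IsClosed (K \ Z) := by
    have hsplit : K \ Z = (K ∩ closure V) \ Z ∪ K \ V := by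
      have hVcl : V ⊆ closure V := subset_closure
      grind
    exact hsplit ▸ hdiff.union (hK.sdiff hV)
  obtain ⟨U, hU, hZU, hUK, hUc⟩ := exists_open_between_and_isCompact_closure hZc
    hKZ.isOpen_compl fun y hy hyK ↦ hyK.2 hy
  refine ⟨U, hU, hZU hxZ, hUc, fun y hy hyK ↦ ?_⟩
  rw [hU.frontier_eq] at hy
  exact hUK hy.1 ⟨hyK, fun hyZ ↦ hy.2 (hZU hyZ)⟩

end Components

theorem frontier_image_subset_image_frontier {X Y : Type*} [TopologicalSpace X]
    [TopologicalSpace Y] [T2Space Y] {f : X → Y} (hf : Continuous f) (hfo : IsOpenMap f)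
    {U : Set X} (hU : IsCompact (closure U)) : frontier (f '' U) ⊆ f '' frontier U := by
  rw [frontier, ← image_closure_of_isCompact hU hf.continuousOn]
  rintro _ ⟨⟨x, hx, rfl⟩, hfx⟩
  exact ⟨x, ⟨hx, fun hxU ↦ hfx (hfo.image_interior_subset U ⟨x, hxU, rfl⟩)⟩, rfl⟩

theorem not_exists_continuousOn_log_sphere (a : ℂ) {R : ℝ} (hR : 0 < R) :
    ¬ ∃ g : ℂ → ℂ, ContinuousOn g (sphere a R) ∧ EqOn (exp ∘ g) (· - a) (sphere a R) := by
  rintro ⟨g, hg, hexp⟩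
  have hmem (t : ℝ) : circleMap a R t ∈ sphere a R := circleMap_mem_sphere a hR.le t
  have hlog (t : ℝ) : exp (g (circleMap a R t)) = R * exp (t * I) := by
    rw [← circleMap_zero, ← circleMap_sub_center a]
    exact hexp (hmem t)
  have hcont : Continuous fun t ↦ g (circleMap a R t) :=
    hg.comp_continuous (continuous_circleMap a R) hmem
  have hlift : (fun t ↦ g (circleMap a R t)) = fun t : ℝ ↦ t * I + g (circleMap a R 0) := by
    refine isCoveringMap_exp.eq_of_comp_eq hcont (by fun_prop) ?_ 0 (by simp)
    ext t
    simp only [Function.comp_apply, Complex.exp_add, hlog, ofReal_zero, zero_mul, Complex.exp_zero,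
      mul_one]
    exact mul_comm _ _
  have hperiod : circleMap a R (2 * Real.pi) = circleMap a R 0 := by
    simpa using periodic_circleMap a R 0
  have h2π := congrFun hlift (2 * Real.pi)
  simp [hperiod, Real.pi_ne_zero] at h2π

theorem not_exists_continuousOn_log_frontier {U : Set ℂ} {a : ℂ} (hU : IsBounded U) (ha : a ∈ U) :
    ¬ ∃ g : ℂ → ℂ, ContinuousOn g (frontier U) ∧ EqOn (exp ∘ g) (· - a) (frontier U) := by
  classical
  rintro ⟨g, hg, hexp⟩
  obtain ⟨G, hG⟩ := ContinuousMap.exists_restrict_eq isClosed_frontier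
    ⟨_, continuousOn_iff_continuous_domRestrict.mp hg⟩
  have hGexp : ∀ z ∈ frontier U, exp (G z) = z - a := fun z hz ↦
    (congrArg exp (DFunLike.congr_fun hG ⟨z, hz⟩)).trans (hexp hz)
  -- Replacing `z - a` by `exp ∘ G` on `U` removes its zero, so it has a logarithm on all of `ℂ`.
  let h : ℂ → ℂ := U.piecewise (fun z ↦ exp (G z)) (· - a)
  have hh : Continuous h := Continuous.piecewise hGexp (by fun_prop) (by fun_prop)
  have hh₀ : 0 ∉ h '' univ := by
    rintro ⟨z, -, hz⟩
    by_cases hzU : z ∈ U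
    · exact exp_ne_zero (G z) ((piecewise_eq_of_mem U _ _ hzU).symm.trans hz)
    · have hza : z - a = 0 := (piecewise_eq_of_notMem U _ _ hzU).symm.trans hz
      exact hzU (sub_eq_zero.mp hza ▸ ha)
  have := (convex_univ (𝕜 := ℝ) (E := ℂ)).contractibleSpace univ_nonempty
  have huniv : IsSimplyConnected (univ : Set ℂ) := SimplyConnectedSpace.ofContractible _
  obtain ⟨k, hk, hkexp⟩ := exists_continuousOn_eqOn_exp_comp huniv isOpen_univ hh.continuousOn hh₀
  obtain ⟨R, hR, hUR⟩ := hU.subset_ball_lt 0 a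
  refine not_exists_continuousOn_log_sphere a hR ⟨k, hk.mono (subset_univ _), fun z hz ↦ ?_⟩
  have hzU : z ∉ U := fun hzU ↦ (hUR hzU).ne hz
  exact (hkexp (mem_univ z)).trans (piecewise_eq_of_notMem U _ _ hzU)

theorem subset_of_frontier_subset_of_isSimplyConnected {B U : Set ℂ} (hB : IsSimplyConnected B)
    (hBo : IsOpen B) (hU : IsBounded U) (hUB : frontier U ⊆ B) : U ⊆ B := by
  intro a haU
  by_contra haB
  have h₀ : 0 ∉ (· - a) '' B := by
    rintro ⟨z, hz, hza⟩
    exact haB (sub_eq_zero.mp hza ▸ hz)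
  obtain ⟨g, hg, hexp⟩ := exists_continuousOn_eqOn_exp_comp hB hBo
    (continuous_sub_right a).continuousOn h₀
  exact not_exists_continuousOn_log_frontier hU haU ⟨g, hg.mono hUB, hexp.mono hUB⟩

theorem TranscEntire.isOpenMap {f : ℂ → ℂ} (hf : TranscEntire f) : IsOpenMap f := by
  have hana : AnalyticOnNhd ℂ f univ := fun z _ ↦ hf.1.analyticAt z
  refine hana.is_constant_or_isOpenMap.resolve_left fun ⟨c, hc⟩ ↦ hf.2 ⟨Polynomial.C c, ?_⟩
  simpa only [Polynomial.eval_C] using funext hc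

theorem stmt11_general {X : Type*} [TopologicalSpace X] [T2Space X] [LocallyCompactSpace X]
    [LocallyConnectedSpace X] [PreconnectedSpace X] {f : X → ℂ} (hf : Continuous f)
    (hfo : IsOpenMap f) {B : Set ℂ} (hBo : IsOpen B) (hB : IsSimplyConnected B) {z w : X}
    (hz : z ∈ f ⁻¹' B) (hw : w ∉ connectedComponentIn (f ⁻¹' B) z) :
    ¬ IsCompact (connectedComponentIn (connectedComponentIn (f ⁻¹' B) z)ᶜ w) := by
  intro hc
  have hSo : IsOpen (f ⁻¹' B) := hBo.preimage hf
  obtain ⟨U, hU, hwU, hUc, hUD⟩ := exists_isOpen_isCompact_closure_frontier_subset_compl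
    hSo.connectedComponentIn.isClosed_compl hw hc
  rw [compl_compl] at hUD
  have himage : f '' U ⊆ B := by
    refine subset_of_frontier_subset_of_isSimplyConnected hB hBo
      ((hUc.image hf).isBounded.subset (image_mono subset_closure)) ?_
    calc frontier (f '' U) ⊆ f '' frontier U := frontier_image_subset_image_frontier hf hfo hUc
      _ ⊆ f '' connectedComponentIn (f ⁻¹' B) z := image_mono hUD
      _ ⊆ B := image_subset_iff.mpr (connectedComponentIn_subset _ z)
  exact hw (subset_connectedComponentIn_of_frontier_subset hSo hz hU
    (image_subset_iff.mp himage) hUD hwU)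

/-- If every unbounded curve has unbounded image under the
transcendental entire function `f`, then every component `D` of the preimage of
a bounded simply connected domain is simply connected: `ℂ \\ D` has no bounded
component. -/
theorem stmt11 (f : ℂ → ℂ) (hf : TranscEntire f)
    (hcurve : ∀ γ : ℝ → ℂ, ContinuousOn γ (Set.Ici 0) → Tendsto γ atTop (Bornology.cobounded ℂ) → ¬ Bornology.IsBounded (f '' (γ '' Set.Ici 0)))
    (B : Set ℂ) (hBo : IsOpen B) (hBb : Bornology.IsBounded B)
    (hBsc : SimplyConnectedSpace ↥B) :
    ∀ z ∈ f ⁻¹' B, ∀ w ∉ connectedComponentIn (f ⁻¹' B) z,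
      ¬ Bornology.IsBounded
        (connectedComponentIn (connectedComponentIn (f ⁻¹' B) z)ᶜ w) := by
  intro z hz w hw hb
  have hD := (hBo.preimage hf.1.continuous).connectedComponentIn (x := z)
  exact stmt11_general hf.1.continuous hf.isOpenMap hBo hBsc hz hw
    (isCompact_of_isClosed_isBounded (isClosed_connectedComponentIn hD.isClosed_compl w) hb)
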